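/- arXiv:2003.06457 — 3 statements merged into one kernel-verified Lean document; each statement's English description precedes it below -/
import Mathlib

section
/- Let Ω be a nonempty set, X a set, S a linear subspace of the real vector space of functions Ω → ℝ (with pointwise operations) containing the constant function 1, and T : S → ℝ a linear map that is signature-preserving (T(ζ) ≥ 0 whenever ζ ∈ S satisfies ζ(ω) ≥ 0 for all ω ∈ Ω). Let η, ξ : Ω → X and f : X → ℝ be such that f∘η, f∘ξ, their pointwise squares f²∘η, f²∘ξ, and the pointwise product (f∘η)·(f∘ξ) all belong to S. Let a, b ∈ ℝ with a ≠ 0 and a + b > 0, and suppose f(ξ(ω)) − f(η(ω)) ≤ b for all ω ∈ Ω and f(ξ(ω)) + f(η(ω)) ≥ a for all ω ∈ Ω. Set c = (2/a)·T(f∘η), C₁ = (T(1) − c)·b + T(f∘η) − T(f∘ξ), and C₂ = (T(1) − c)·b² + T(f²∘η) − T(f²∘ξ). Then C₁ ≥ 0 implies C₂ ≥ 0. -/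
/-!
Apply the positive functional `T` to the pointwise inequality `0 ≤ (b - (v - u)) * (v + u - a)`,
where `u = f ∘ η` and `v = f ∘ ξ`: the cross terms `u * v` cancel. Since
`a * c = 2 * T u`, the result is exactly `(a + b) * C₁ ≤ C₂`.
-/

section HlawkaForm

variable {R A : Type*} [CommRing R] [CommRing A] [Algebra R A] {S : Submodule R A} {u v : A}

/-- The Hlawka one-form `C₁` of `u = f ∘ η` and `v = f ∘ ξ`, with an algebra `A` in place of
`Ω → ℝ` and with `c` a free parameter, so that no division by `a` is needed. -/
def hlawkaOneForm (T : S →ₗ[R] R) (b c : R) (h1 : 1 ∈ S) (hu : u ∈ S) (hv : v ∈ S) : R :=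
  (T ⟨1, h1⟩ - c) * b + T ⟨u, hu⟩ - T ⟨v, hv⟩

/-- The Hlawka two-form `C₂` of `u = f ∘ η` and `v = f ∘ ξ`, with an algebra `A` in place of
`Ω → ℝ` and with `c` a free parameter, so that no division by `a` is needed. -/
def hlawkaTwoForm (T : S →ₗ[R] R) (b c : R) (h1 : 1 ∈ S) (hu2 : u ^ 2 ∈ S) (hv2 : v ^ 2 ∈ S) : R :=
  (T ⟨1, h1⟩ - c) * b ^ 2 + T ⟨u ^ 2, hu2⟩ - T ⟨v ^ 2, hv2⟩

theorem algebraMap_sub_sub_mul_add_sub_algebraMap (a b : R) (u v : A) :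
    (algebraMap R A b - (v - u)) * (v + u - algebraMap R A a) =
      (b - a) • u + (a + b) • v - (a * b) • 1 + u ^ 2 - v ^ 2 := by
  simp only [Algebra.smul_def, map_sub, map_add, map_mul]
  ring

theorem hlawkaTwoForm_sub_mul_hlawkaOneForm (T : S →ₗ[R] R) {a b c : R} (h1 : 1 ∈ S)
    (hu : u ∈ S) (hv : v ∈ S) (hu2 : u ^ 2 ∈ S) (hv2 : v ^ 2 ∈ S) (hc : a * c = 2 * T ⟨u, hu⟩) :
    hlawkaTwoForm T b c h1 hu2 hv2 - (a + b) * hlawkaOneForm T b c h1 hu hv =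
      T ((b - a) • ⟨u, hu⟩ + (a + b) • ⟨v, hv⟩ - (a * b) • ⟨1, h1⟩
        + ⟨u ^ 2, hu2⟩ - ⟨v ^ 2, hv2⟩) := by
  simp only [hlawkaTwoForm, hlawkaOneForm, map_add, map_sub, map_smul, smul_eq_mul]
  linear_combination b * hc

variable [PartialOrder R] [PartialOrder A] [IsOrderedRing A]

theorem mul_hlawkaOneForm_le_hlawkaTwoForm [IsOrderedAddMonoid R] (T : S →ₚ[R] R) {a b c : R}
    (h1 : 1 ∈ S) (hu : u ∈ S) (hv : v ∈ S) (hu2 : u ^ 2 ∈ S) (hv2 : v ^ 2 ∈ S)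
    (hc : a * c = 2 * T ⟨u, hu⟩)
    (hdiff : v - u ≤ algebraMap R A b) (hsum : algebraMap R A a ≤ v + u) :
    (a + b) * hlawkaOneForm T.toLinearMap b c h1 hu hv ≤
      hlawkaTwoForm T.toLinearMap b c h1 hu2 hv2 := by
  have hpos : 0 ≤ (b - a) • u + (a + b) • v - (a * b) • 1 + u ^ 2 - v ^ 2 := by
    rw [← algebraMap_sub_sub_mul_add_sub_algebraMap]
    exact mul_nonneg (sub_nonneg.2 hdiff) (sub_nonneg.2 hsum)
  rw [← sub_nonneg, hlawkaTwoForm_sub_mul_hlawkaOneForm T.toLinearMap h1 hu hv hu2 hv2 hc]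
  exact map_nonneg T (Subtype.coe_le_coe.1 hpos)

theorem hlawka_form_II_forward_general [IsOrderedRing R] (T : S →ₚ[R] R) {a b c : R}
    (h1 : 1 ∈ S) (hu : u ∈ S) (hv : v ∈ S) (hu2 : u ^ 2 ∈ S) (hv2 : v ^ 2 ∈ S)
    (hc : a * c = 2 * T ⟨u, hu⟩) (hab : 0 ≤ a + b)
    (hdiff : v - u ≤ algebraMap R A b) (hsum : algebraMap R A a ≤ v + u)
    (hC₁ : 0 ≤ hlawkaOneForm T.toLinearMap b c h1 hu hv) :
    0 ≤ hlawkaTwoForm T.toLinearMap b c h1 hu2 hv2 :=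
  (mul_nonneg hab hC₁).trans
    (mul_hlawkaOneForm_le_hlawkaTwoForm T h1 hu hv hu2 hv2 hc hdiff hsum)

end HlawkaForm

theorem hlawka_form_II_forward {Ω X : Type*} [Nonempty Ω]
    (S : Submodule ℝ (Ω → ℝ)) (h1 : (1 : Ω → ℝ) ∈ S)
    (T : S →ₗ[ℝ] ℝ)
    (hT : ∀ ζ : S, (∀ ω : Ω, 0 ≤ (ζ : Ω → ℝ) ω) → 0 ≤ T ζ)
    (η ξ : Ω → X) (f : X → ℝ)
    (hfη : (fun ω => f (η ω)) ∈ S) (hfξ : (fun ω => f (ξ ω)) ∈ S)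
    (hfη2 : (fun ω => (f (η ω)) ^ 2) ∈ S) (hfξ2 : (fun ω => (f (ξ ω)) ^ 2) ∈ S)
    (hprod : (fun ω => f (η ω) * f (ξ ω)) ∈ S)
    (a b : ℝ) (ha : a ≠ 0) (hab : 0 < a + b)
    (hdiff : ∀ ω : Ω, f (ξ ω) - f (η ω) ≤ b)
    (hsum : ∀ ω : Ω, a ≤ f (ξ ω) + f (η ω)) :
    0 ≤ (T ⟨1, h1⟩ - (2 / a) * T ⟨fun ω => f (η ω), hfη⟩) * b + T ⟨fun ω => f (η ω), hfη⟩ - T ⟨fun ω => f (ξ ω), hfξ⟩ → 0 ≤ (T ⟨1, h1⟩ - (2 / a) * T ⟨fun ω => f (η ω), hfη⟩) * b ^ 2 + T ⟨fun ω => (f (η ω)) ^ 2, hfη2⟩ - T ⟨fun ω => (f (ξ ω)) ^ 2, hfξ2⟩ :=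
  hlawka_form_II_forward_general (PositiveLinearMap.mk₀ T hT) h1 hfη hfξ hfη2 hfξ2
    (show a * (2 / a * T ⟨_, hfη⟩) = 2 * T ⟨_, hfη⟩ by field_simp) hab.le hdiff hsum
end

section
/- Let G be an abelian (additive) semigroup and F : G → ℝ a nonnegative function that is superadditive, i.e. F(x) + F(y) ≤ F(x+y) for all x, y ∈ G. For an integer k, say that H(k) holds if for all x, y, z ∈ G: F(x+y)^(1/2^k) + F(y+z)^(1/2^k) + F(z+x)^(1/2^k) ≤ F(x)^(1/2^k) + F(y)^(1/2^k) + F(z)^(1/2^k) + F(x+y+z)^(1/2^k). If H(k₀) holds for some integer k₀ ≤ 0, then H(k) holds for every integer k ≤ k₀. -/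
/-!
Raising a superadditive `F ≥ 0` to a power `p ≥ 1` preserves superadditivity, and lowering `k` by
one squares `F ^ (1 / 2 ^ k)`, so it is enough to see that Hlawka's inequality survives squaring of
a superadditive `f ≥ 0`. Write `f (x + y) = f x + f y + p`, and let `q`, `r` be the excesses of the
other two pairs. The inequality says that `f (x + y + z)` is at least `f x + f y + f z + p + q + r`,
and the square of this sum exceeds what is needed by a polynomial in these six quantities with
nonnegative coefficients.
-/

/-- Superadditivity of a function on any type with an addition, the standing assumption on `F`.
Mathlib's `Subadditive` is the opposite notion for real sequences. -/
def Superadditive {G R : Type*} [Add G] [Add R] [LE R] (f : G → R) : Prop :=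
  ∀ x y, f x + f y ≤ f (x + y)

/-- Hlawka's inequality for `f`, with `f` in place of the norm of the classical inequality. The
condition `H(k)` on `F` is this property of the function `F ^ (1 / 2 ^ k)`. -/
def HlawkaInequality {G R : Type*} [Add G] [Add R] [LE R] (f : G → R) : Prop :=
  ∀ x y z, f (x + y) + f (y + z) + f (z + x) ≤ f x + f y + f z + f (x + y + z)

theorem Superadditive.pow {G R : Type*} [Add G] [Semiring R] [PartialOrder R] [IsOrderedRing R]
    {f : G → R} (hf : Superadditive f) (hf₀ : ∀ x, 0 ≤ f x) {n : ℕ} (hn : n ≠ 0) :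
    Superadditive fun x ↦ f x ^ n := fun x y ↦
  (pow_add_pow_le (hf₀ x) (hf₀ y) hn).trans <|
    pow_le_pow_left₀ (add_nonneg (hf₀ x) (hf₀ y)) (hf x y) n

section StrictOrderedSemiring

variable {G R : Type*} [Add G] [CommSemiring R] [PartialOrder R] [IsStrictOrderedRing R]
  [ExistsAddOfLE R] {f : G → R}

theorem add_sq_le_add_sq_of_hlawka {a b c u v w s : R} (ha : 0 ≤ a) (hb : 0 ≤ b) (hc : 0 ≤ c)
    (hu : a + b ≤ u) (hv : b + c ≤ v) (hw : c + a ≤ w) (hs : u + v + w ≤ a + b + c + s) :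
    u ^ 2 + v ^ 2 + w ^ 2 ≤ a ^ 2 + b ^ 2 + c ^ 2 + s ^ 2 := by
  obtain ⟨p, hp, rfl⟩ := exists_nonneg_add_of_le hu
  obtain ⟨q, hq, rfl⟩ := exists_nonneg_add_of_le hv
  obtain ⟨r, hr, rfl⟩ := exists_nonneg_add_of_le hw
  have hs' : a + b + c + p + q + r ≤ s := by
    refine le_of_add_le_add_left (a := a + b + c) (le_of_eq_of_le ?_ hs)
    ring
  calc (a + b + p) ^ 2 + (b + c + q) ^ 2 + (c + a + r) ^ 2
    _ ≤ (a + b + p) ^ 2 + (b + c + q) ^ 2 + (c + a + r) ^ 2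
          + 2 * (p * c + q * a + r * b + p * q + q * r + r * p) :=
        le_add_of_nonneg_right (by positivity)
    _ = a ^ 2 + b ^ 2 + c ^ 2 + (a + b + c + p + q + r) ^ 2 := by ring
    _ ≤ a ^ 2 + b ^ 2 + c ^ 2 + s ^ 2 := by gcongr

namespace HlawkaInequality

theorem sq (h : HlawkaInequality f) (hf₀ : ∀ x, 0 ≤ f x) (hf : Superadditive f) :
    HlawkaInequality fun x ↦ f x ^ 2 := fun x y z ↦
  add_sq_le_add_sq_of_hlawka (hf₀ x) (hf₀ y) (hf₀ z) (hf x y) (hf y z) (hf z x) (h x y z)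

theorem pow_two_pow (h : HlawkaInequality f) (hf₀ : ∀ x, 0 ≤ f x) (hf : Superadditive f) (n : ℕ) :
    HlawkaInequality fun x ↦ f x ^ 2 ^ n := by
  induction n with
  | zero => simpa only [pow_zero, pow_one] using h
  | succ n ih =>
    simpa only [pow_succ 2 n, pow_mul] using
      ih.sq (fun x ↦ pow_nonneg (hf₀ x) _) (hf.pow hf₀ (by positivity))

end HlawkaInequality

end StrictOrderedSemiring

theorem Superadditive.rpow {G : Type*} [Add G] {F : G → ℝ} (hF : Superadditive F)
    (hF₀ : ∀ x, 0 ≤ F x) {p : ℝ} (hp : 1 ≤ p) : Superadditive fun x ↦ F x ^ p := fun x y ↦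
  (Real.add_rpow_le_rpow_add (hF₀ x) (hF₀ y) hp).trans <|
    Real.rpow_le_rpow (add_nonneg (hF₀ x) (hF₀ y)) (hF x y) (zero_le_one.trans hp)

theorem hlawka_power_superadditive_general {G : Type*} [Add G] {F : G → ℝ} (hF₀ : ∀ x, 0 ≤ F x)
    (hF : Superadditive F) {p : ℝ} (hp : 1 ≤ p) (h : HlawkaInequality fun x ↦ F x ^ p) (n : ℕ) :
    HlawkaInequality fun x ↦ F x ^ (p * 2 ^ n) := by
  have rpow_mul_two_pow (x : G) : F x ^ (p * 2 ^ n) = (F x ^ p) ^ 2 ^ n := by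
    simpa only [Nat.cast_pow, Nat.cast_ofNat] using Real.rpow_mul_natCast (hF₀ x) p (2 ^ n)
  simpa only [rpow_mul_two_pow] using
    h.pow_two_pow (fun x ↦ Real.rpow_nonneg (hF₀ x) p) (hF.rpow hF₀ hp) n

theorem one_div_zpow_eq_one_div_zpow_add_mul_pow {K : Type*} [Field K] {a : K} (ha : a ≠ 0) (k : ℤ)
    (n : ℕ) : 1 / a ^ k = 1 / a ^ (k + n) * a ^ n := by
  rw [zpow_add₀ ha, zpow_natCast]
  field_simp

theorem hlawka_power_superadditive {G : Type*} [AddCommSemigroup G]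
    (F : G → ℝ) (hF0 : ∀ x : G, 0 ≤ F x)
    (hsuper : ∀ x y : G, F x + F y ≤ F (x + y))
    (k₀ : ℤ) (hk₀ : k₀ ≤ 0)
    (hH : ∀ x y z : G,
      F (x + y) ^ (1 / (2 : ℝ) ^ k₀) + F (y + z) ^ (1 / (2 : ℝ) ^ k₀)
          + F (z + x) ^ (1 / (2 : ℝ) ^ k₀)
        ≤ F x ^ (1 / (2 : ℝ) ^ k₀) + F y ^ (1 / (2 : ℝ) ^ k₀)
          + F z ^ (1 / (2 : ℝ) ^ k₀) + F (x + y + z) ^ (1 / (2 : ℝ) ^ k₀)) :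
    ∀ k : ℤ, k ≤ k₀ → ∀ x y z : G,
      F (x + y) ^ (1 / (2 : ℝ) ^ k) + F (y + z) ^ (1 / (2 : ℝ) ^ k)
          + F (z + x) ^ (1 / (2 : ℝ) ^ k)
        ≤ F x ^ (1 / (2 : ℝ) ^ k) + F y ^ (1 / (2 : ℝ) ^ k)
          + F z ^ (1 / (2 : ℝ) ^ k) + F (x + y + z) ^ (1 / (2 : ℝ) ^ k) := by
  intro k hk
  obtain ⟨n, rfl⟩ := Int.le.dest hk
  rw [one_div_zpow_eq_one_div_zpow_add_mul_pow two_ne_zero k n]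
  have one_le_exponent : 1 ≤ 1 / (2 : ℝ) ^ (k + n) :=
    one_le_one_div (by positivity) (zpow_le_one_of_nonpos₀ one_le_two hk₀)
  exact hlawka_power_superadditive_general hF0 hsuper one_le_exponent hH n
end

section
/- Let Ω be a nonempty set, let G be an abelian group equipped with a nonnegative, symmetric and subadditive function x ↦ |x| (i.e. |x| ≥ 0, |−x| = |x|, |x| + |y| ≥ |x+y|), and let S be a linear subspace of the real-valued functions on Ω containing the constant function 1, with T : S → ℝ linear and signature-preserving (T(ζ) ≥ 0 whenever ζ(ω) ≥ 0 for all ω). Let Sc : ℝ → ℝ be concave and nonnegative on [0, ∞), let ĝ : Ω → G, and let w ∈ G. Assume the functions ω ↦ Sc(|ĝ(ω)|), ω ↦ Sc(|ĝ(ω) − w|), their pointwise squares, and their pointwise product all belong to S. Let A ∈ ℝ with A ≠ 0 and A + Sc(|w|) > 0, and assume that for every x ∈ Ω such that Sc(|ĝ(x)|) + Sc(|w|) ≠ Sc(|ĝ(x) − w|), one has A ≥ Sc(|ĝ(x)|) + Sc(|w − ĝ(x)|). Set C = 2·T(ω ↦ Sc(|ĝ(ω)|))/A. Then the squared Hlawka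 inequality (T(1) − C)·Sc(|w|)² + T(ω ↦ Sc(|ĝ(ω)|)²) ≥ T(ω ↦ Sc(|ĝ(ω) − w|)²) implies the Hlawka inequality (T(1) − C)·Sc(|w|) + T(ω ↦ Sc(|ĝ(ω)|)) ≥ T(ω ↦ Sc(|ĝ(ω) − w|)). -/
/-!
Write `u = Sc |g|`, `v = Sc |g - w|` and `c = Sc |w|`. A concave nonnegative function on `[0, ∞)` is
monotone and subadditive, so `v ≤ u + c`, and the hypothesis on `A` makes the product
`(A - u - v) * (u + c - v)` nonnegative everywhere: one factor vanishes or both are nonnegative.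
The cross terms `u * v` cancel in its expansion, which is therefore a combination of `1`, `u`, `v`,
`u ^ 2` and `v ^ 2`. Applying `T` and the squared inequality bounds `(A + c) * T v`, and the choice
`C = 2 * T u / A` makes the bound equal to `A + c` times `(T 1 - C) * c + T u`.
-/

open Set

section Concave

theorem smul_le_map_smul_of_concaveOn {𝕜 E β : Type*} [Ring 𝕜] [PartialOrder 𝕜]
    [IsOrderedAddMonoid 𝕜] [AddCommMonoid E] [Module 𝕜 E] [AddCommMonoid β] [PartialOrder β]
    [IsOrderedAddMonoid β] [Module 𝕜 β] [PosSMulMono 𝕜 β] {s : Set E} {f : E → β}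
    (hf : ConcaveOn 𝕜 s f) (hs : 0 ∈ s) (hf0 : 0 ≤ f 0) {x : E} (hx : x ∈ s) {a : 𝕜}
    (ha0 : 0 ≤ a) (ha1 : a ≤ 1) : a • f x ≤ f (a • x) := by
  have hb : 0 ≤ 1 - a := sub_nonneg.mpr ha1
  calc
    a • f x ≤ a • f x + (1 - a) • f 0 := le_add_of_nonneg_right (smul_nonneg hb hf0)
    _ ≤ f (a • x + (1 - a) • 0) := hf.2 hx hs ha0 hb (add_sub_cancel a 1)
    _ = f (a • x) := by rw [smul_zero, add_zero]

variable {𝕜 : Type*} [Field 𝕜] [LinearOrder 𝕜] [IsStrictOrderedRing 𝕜]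

theorem map_add_le_of_concaveOn {β : Type*} [AddCommMonoid β] [PartialOrder β]
    [IsOrderedAddMonoid β] [Module 𝕜 β] [PosSMulMono 𝕜 β] {s : Set 𝕜} {f : 𝕜 → β}
    (hf : ConcaveOn 𝕜 s f) (hs : 0 ∈ s) (hf0 : 0 ≤ f 0) {x y : 𝕜} (hx : 0 ≤ x) (hy : 0 ≤ y)
    (hxy : x + y ∈ s) : f (x + y) ≤ f x + f y := by
  obtain hzero | hpos := (add_nonneg hx hy).eq_or_lt'
  · obtain ⟨rfl, rfl⟩ := (add_eq_zero_iff_of_nonneg hx hy).mp hzero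
    rw [add_zero]
    exact le_add_of_nonneg_right hf0
  have map_part {z : 𝕜} (hz0 : 0 ≤ z) (hz : z ≤ x + y) : (z / (x + y)) • f (x + y) ≤ f z := by
    simpa only [smul_eq_mul, div_mul_cancel₀ z hpos.ne'] using
      smul_le_map_smul_of_concaveOn hf hs hf0 hxy (div_nonneg hz0 hpos.le)
        (div_le_one_of_le₀ hz hpos.le)
  calc
    f (x + y) = (x / (x + y)) • f (x + y) + (y / (x + y)) • f (x + y) := by
      rw [← add_smul, ← add_div, div_self hpos.ne', one_smul]
    _ ≤ f x + f y :=
      add_le_add (map_part hx (le_add_of_nonneg_right hy)) (map_part hy (le_add_of_nonneg_left hx))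

theorem monotoneOn_Ici_of_concaveOn_of_bddBelow {f : 𝕜 → 𝕜} {a : 𝕜}
    (hf : ConcaveOn 𝕜 (Ici a) f) (hbdd : BddBelow (f '' Ici a)) : MonotoneOn f (Ici a) := by
  intro x hx y hy hxy
  by_contra! hdecr
  obtain ⟨m, hm⟩ := hbdd
  have hlt : x < y := hxy.lt_of_ne fun h => hdecr.ne (congrArg f h.symm)
  have hmy : m ≤ f y := hm (mem_image_of_mem f hy)
  -- The line through the two points of the graph over `x` and `y` takes the value `m - 1` at `z`.
  let k := (f y - m + 1) / (f x - f y)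
  let z := y + k * (y - x)
  have hk : 0 < k := div_pos (by linarith) (sub_pos.mpr hdecr)
  have hyz : y < z := lt_add_of_pos_right y (mul_pos hk (sub_pos.mpr hlt))
  have hz : z ∈ Ici a := le_trans hy hyz.le
  have hslope : (f z - f y) / (z - y) ≤ (f y - f x) / (y - x) :=
    hf.slope_anti_adjacent hx hz hlt hyz
  have hline : (f y - f x) / (y - x) * (z - y) = m - 1 - f y := by
    have hyx : y - x ≠ 0 := (sub_pos.mpr hlt).ne'
    have hfxy : f x - f y ≠ 0 := (sub_pos.mpr hdecr).ne'
    simp only [z, k]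
    field_simp
    ring
  have hfz : f z - f y ≤ m - 1 - f y := hline ▸ (div_le_iff₀ (sub_pos.mpr hyz)).mp hslope
  linarith [hm (mem_image_of_mem f hz)]

theorem map_sub_le_of_concaveOn {G : Type*} [AddGroup G] {nm : G → 𝕜} (hnm0 : ∀ x, 0 ≤ nm x)
    (hsymm : ∀ x, nm (-x) = nm x) (hsub : ∀ x y, nm (x + y) ≤ nm x + nm y) {f : 𝕜 → 𝕜}
    (hf : ConcaveOn 𝕜 (Ici 0) f) (hf0 : ∀ t, 0 ≤ t → 0 ≤ f t) (x y : G) :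
    f (nm (x - y)) ≤ f (nm x) + f (nm y) := by
  have hmono : MonotoneOn f (Ici 0) :=
    monotoneOn_Ici_of_concaveOn_of_bddBelow hf ⟨0, forall_mem_image.mpr hf0⟩
  have hnm_add : 0 ≤ nm x + nm y := add_nonneg (hnm0 x) (hnm0 y)
  have hnm_sub : nm (x - y) ≤ nm x + nm y := by
    simpa only [sub_eq_add_neg, hsymm] using hsub x (-y)
  calc
    f (nm (x - y)) ≤ f (nm x + nm y) := hmono (hnm0 _) hnm_add hnm_sub
    _ ≤ f (nm x) + f (nm y) :=
      map_add_le_of_concaveOn hf self_mem_Ici (hf0 0 le_rfl) (hnm0 x) (hnm0 y) hnm_add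

end Concave

section Hlawka

variable {𝕜 Ω : Type*} [Field 𝕜] [LinearOrder 𝕜] [IsStrictOrderedRing 𝕜]
  {S : Submodule 𝕜 (Ω → 𝕜)} {T : S →ₗ[𝕜] 𝕜} {u v : Ω → 𝕜} {A c : 𝕜}

theorem hlawka_operator_le_of_mul_nonneg
    (hT : ∀ ζ : S, (∀ ω, 0 ≤ (ζ : Ω → 𝕜) ω) → 0 ≤ T ζ)
    (h1 : (1 : Ω → 𝕜) ∈ S) (hu : u ∈ S) (hv : v ∈ S)
    (hu2 : (fun ω => u ω ^ 2) ∈ S) (hv2 : (fun ω => v ω ^ 2) ∈ S)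
    (hmul : ∀ ω, 0 ≤ (A - u ω - v ω) * (u ω + c - v ω)) :
    (A + c) * T ⟨v, hv⟩ + T ⟨fun ω => u ω ^ 2, hu2⟩ ≤
      (A - c) * T ⟨u, hu⟩ + A * c * T ⟨1, h1⟩ + T ⟨fun ω => v ω ^ 2, hv2⟩ := by
  let ζ : S := (A - c) • ⟨u, hu⟩ + (A * c) • ⟨1, h1⟩ - (A + c) • ⟨v, hv⟩
    - ⟨fun ω => u ω ^ 2, hu2⟩ + ⟨fun ω => v ω ^ 2, hv2⟩
  have hζ (ω : Ω) : (ζ : Ω → 𝕜) ω = (A - u ω - v ω) * (u ω + c - v ω) := by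
    simp only [ζ, Submodule.coe_add, Submodule.coe_sub, Submodule.coe_smul, Pi.add_apply,
      Pi.sub_apply, Pi.smul_apply, smul_eq_mul, Pi.one_apply]
    ring
  have hTζ : 0 ≤ T ζ := hT ζ fun ω => (hmul ω).trans_eq (hζ ω).symm
  simp only [ζ, map_add, map_sub, map_smul, smul_eq_mul] at hTζ
  linarith

theorem hlawka_operator_of_hlawka_operator_sq
    (hT : ∀ ζ : S, (∀ ω, 0 ≤ (ζ : Ω → 𝕜) ω) → 0 ≤ T ζ)
    (h1 : (1 : Ω → 𝕜) ∈ S) (hu : u ∈ S) (hv : v ∈ S)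
    (hu2 : (fun ω => u ω ^ 2) ∈ S) (hv2 : (fun ω => v ω ^ 2) ∈ S)
    (hA : A ≠ 0) (hAc : 0 < A + c) (hdiff : ∀ ω, v ω ≤ u ω + c)
    (hctrl : ∀ ω, u ω + c ≠ v ω → u ω + v ω ≤ A)
    (hsq : T ⟨fun ω => v ω ^ 2, hv2⟩ ≤
      (T ⟨1, h1⟩ - 2 * T ⟨u, hu⟩ / A) * c ^ 2 + T ⟨fun ω => u ω ^ 2, hu2⟩) :
    T ⟨v, hv⟩ ≤ (T ⟨1, h1⟩ - 2 * T ⟨u, hu⟩ / A) * c + T ⟨u, hu⟩ := by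
  have hmul (ω : Ω) : 0 ≤ (A - u ω - v ω) * (u ω + c - v ω) := by
    by_cases heq : u ω + c = v ω
    · rw [heq, sub_self, mul_zero]
    · exact mul_nonneg (by linarith [hctrl ω heq]) (sub_nonneg.mpr (hdiff ω))
  refine le_of_mul_le_mul_left ?_ hAc
  calc
    (A + c) * T ⟨v, hv⟩
      ≤ (A - c) * T ⟨u, hu⟩ + A * c * T ⟨1, h1⟩
          + (T ⟨1, h1⟩ - 2 * T ⟨u, hu⟩ / A) * c ^ 2 := by
      linarith [hlawka_operator_le_of_mul_nonneg hT h1 hu hv hu2 hv2 hmul]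
    _ = (A + c) * ((T ⟨1, h1⟩ - 2 * T ⟨u, hu⟩ / A) * c + T ⟨u, hu⟩) := by
      field_simp
      ring

end Hlawka

theorem hlawka_group_operator_general {𝕜 Ω G : Type*} [Field 𝕜] [LinearOrder 𝕜]
    [IsStrictOrderedRing 𝕜] [AddGroup G]
    (nm : G → 𝕜) (hnm0 : ∀ x : G, 0 ≤ nm x)
    (hsymm : ∀ x : G, nm (-x) = nm x)
    (hsub : ∀ x y : G, nm (x + y) ≤ nm x + nm y)
    (S : Submodule 𝕜 (Ω → 𝕜)) (h1 : (1 : Ω → 𝕜) ∈ S)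
    (T : S →ₗ[𝕜] 𝕜)
    (hT : ∀ ζ : S, (∀ ω : Ω, 0 ≤ (ζ : Ω → 𝕜) ω) → 0 ≤ T ζ)
    (Sc : 𝕜 → 𝕜) (hconc : ConcaveOn 𝕜 (Set.Ici (0 : 𝕜)) Sc)
    (hSc0 : ∀ t : 𝕜, 0 ≤ t → 0 ≤ Sc t)
    (g : Ω → G) (w : G)
    (hg : (fun ω => Sc (nm (g ω))) ∈ S)
    (hgw : (fun ω => Sc (nm (g ω - w))) ∈ S)
    (hg2 : (fun ω => Sc (nm (g ω)) ^ 2) ∈ S)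
    (hgw2 : (fun ω => Sc (nm (g ω - w)) ^ 2) ∈ S)
    (A : 𝕜) (hA : A ≠ 0) (hAw : 0 < A + Sc (nm w))
    (hctrl : ∀ x : Ω, Sc (nm (g x)) + Sc (nm w) ≠ Sc (nm (g x - w)) →
      Sc (nm (g x)) + Sc (nm (w - g x)) ≤ A) :
    (T ⟨1, h1⟩ - 2 * T ⟨fun ω => Sc (nm (g ω)), hg⟩ / A) * Sc (nm w) ^ 2
        + T ⟨fun ω => Sc (nm (g ω)) ^ 2, hg2⟩
      ≥ T ⟨fun ω => Sc (nm (g ω - w)) ^ 2, hgw2⟩ →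
    (T ⟨1, h1⟩ - 2 * T ⟨fun ω => Sc (nm (g ω)), hg⟩ / A) * Sc (nm w)
        + T ⟨fun ω => Sc (nm (g ω)), hg⟩
      ≥ T ⟨fun ω => Sc (nm (g ω - w)), hgw⟩ :=
  hlawka_operator_of_hlawka_operator_sq hT h1 hg hgw hg2 hgw2 hA hAw
    (fun x => map_sub_le_of_concaveOn hnm0 hsymm hsub hconc hSc0 (g x) w)
    (fun x hne => by simpa only [← hsymm (w - g x), neg_sub] using hctrl x hne)

theorem hlawka_group_operator {Ω G : Type*} [Nonempty Ω] [AddCommGroup G]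
    (nm : G → ℝ) (hnm0 : ∀ x : G, 0 ≤ nm x)
    (hsymm : ∀ x : G, nm (-x) = nm x)
    (hsub : ∀ x y : G, nm (x + y) ≤ nm x + nm y)
    (S : Submodule ℝ (Ω → ℝ)) (h1 : (1 : Ω → ℝ) ∈ S)
    (T : S →ₗ[ℝ] ℝ)
    (hT : ∀ ζ : S, (∀ ω : Ω, 0 ≤ (ζ : Ω → ℝ) ω) → 0 ≤ T ζ)
    (Sc : ℝ → ℝ) (hconc : ConcaveOn ℝ (Set.Ici (0 : ℝ)) Sc)
    (hSc0 : ∀ t : ℝ, 0 ≤ t → 0 ≤ Sc t)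
    (g : Ω → G) (w : G)
    (hg : (fun ω => Sc (nm (g ω))) ∈ S)
    (hgw : (fun ω => Sc (nm (g ω - w))) ∈ S)
    (hg2 : (fun ω => Sc (nm (g ω)) ^ 2) ∈ S)
    (hgw2 : (fun ω => Sc (nm (g ω - w)) ^ 2) ∈ S)
    (hprod : (fun ω => Sc (nm (g ω)) * Sc (nm (g ω - w))) ∈ S)
    (A : ℝ) (hA : A ≠ 0) (hAw : 0 < A + Sc (nm w))
    (hctrl : ∀ x : Ω, Sc (nm (g x)) + Sc (nm w) ≠ Sc (nm (g x - w)) →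
      Sc (nm (g x)) + Sc (nm (w - g x)) ≤ A) :
    (T ⟨1, h1⟩ - 2 * T ⟨fun ω => Sc (nm (g ω)), hg⟩ / A) * Sc (nm w) ^ 2
        + T ⟨fun ω => Sc (nm (g ω)) ^ 2, hg2⟩
      ≥ T ⟨fun ω => Sc (nm (g ω - w)) ^ 2, hgw2⟩ →
    (T ⟨1, h1⟩ - 2 * T ⟨fun ω => Sc (nm (g ω)), hg⟩ / A) * Sc (nm w)
        + T ⟨fun ω => Sc (nm (g ω)), hg⟩
      ≥ T ⟨fun ω => Sc (nm (g ω - w)), hgw⟩ :=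
  hlawka_group_operator_general nm hnm0 hsymm hsub S h1 T hT Sc hconc hSc0 g w hg hgw hg2 hgw2
    A hA hAw hctrl
end
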